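/- Let p be a prime and G a group of order p^4 with |G'| = p^2 and |M(G)| = p^2 (i.e. s(G) = 2, since (4-1)(4-2)/2 - 1 = 2). Then G is isomorphic to one of the following presented groups: (1) ⟨a, b | a^9 = b^3 = 1, [a,b,a] = 1, [a,b,b] = a^6, [a,b,b,b] = 1⟩ (with p = 3); (2) ⟨a, b | a^p = 1, b^p = 1, [a,b,a] = [a,b,b,a] = [a,b,b,b] = 1⟩ (with p ≠ 3). -/

import Mathlib

/-- The kernel of the canonical free presentation `FreeGroup G → G`. -/
def presentationKernel (G : Type u) [Group G] : Subgroup (FreeGroup G) :=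
  (FreeGroup.lift (id : G → G)).ker

/-- The Schur multiplier `M(G) = H₂(G, ℤ)` (second integral group homology) of a
group `G`, realised via Hopf's integral formula `H₂(G, ℤ) ≅ (R ⊓ [F, F]) / [F, R]`,
where `F = FreeGroup G` is the canonical free group surjecting onto `G` with
kernel `R`. -/
def SchurMultiplier (G : Type u) [Group G] : Type u :=
  ↥(presentationKernel G ⊓ commutator (FreeGroup G)) ⧸
    (⁅(⊤ : Subgroup (FreeGroup G)), presentationKernel G⁆.subgroupOf
      (presentationKernel G ⊓ commutator (FreeGroup G)))

/-- A finite `p`-group `H` is extraspecial if its center, derived subgroup and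
Frattini subgroup coincide and have order `p`. -/
def IsExtraspecial (p : ℕ) (H : Type*) [Group H] : Prop :=
  Subgroup.center H = commutator H ∧ Subgroup.center H = frattini H ∧
    Nat.card (Subgroup.center H) = p

/-- The commutator `[x, y] = x⁻¹y⁻¹xy`. -/
def pComm {G : Type*} [Group G] (x y : G) : G := x⁻¹ * y⁻¹ * x * y

/-- Relators of `⟨a, b ∣ a⁹ = b³ = 1, [a,b,a] = 1, [a,b,b] = a⁶, [a,b,b,b] = 1⟩`. -/
def relsOrd81 : Set (FreeGroup (Fin 2)) :=
  { (FreeGroup.of 0) ^ 9, (FreeGroup.of 1) ^ 3,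
    pComm (pComm (FreeGroup.of 0) (FreeGroup.of 1)) (FreeGroup.of 0),
    pComm (pComm (FreeGroup.of 0) (FreeGroup.of 1)) (FreeGroup.of 1) *
      ((FreeGroup.of 0) ^ 6)⁻¹,
    pComm (pComm (pComm (FreeGroup.of 0) (FreeGroup.of 1)) (FreeGroup.of 1))
      (FreeGroup.of 1) }

/-- Relators of
`⟨a, b ∣ a^p = b^p = 1, [a,b,a] = [a,b,b,a] = [a,b,b,b] = 1⟩`. -/
def relsOrdP4Class3 (p : ℕ) : Set (FreeGroup (Fin 2)) :=
  { (FreeGroup.of 0) ^ p, (FreeGroup.of 1) ^ p,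
    pComm (pComm (FreeGroup.of 0) (FreeGroup.of 1)) (FreeGroup.of 0),
    pComm (pComm (pComm (FreeGroup.of 0) (FreeGroup.of 1)) (FreeGroup.of 1))
      (FreeGroup.of 0),
    pComm (pComm (pComm (FreeGroup.of 0) (FreeGroup.of 1)) (FreeGroup.of 1))
      (FreeGroup.of 1) }

/-!
Let `X = F / [F, R]` for the presentation `G = F / R` with `F` free on `G`. The kernel of `X → G`
is central and `|X'| = |M(G)| * |G'|`, so `X'` is larger than `p ^ 3`.

`G` is generated by some `a, b` with `a` centralising `G'`; put `c = [a, b]` and `d = [c, b]`. After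
lifting to `X`, commutators do not depend on the choice of the lifts, and `X'` is generated by `c`,
`d` and the central elements `e = [c, a]`, `u = [d, b]`.

If `p = 2`, then `X'` is cyclic, generated by `c`, and `c ^ 8 = 1`. If `p` is odd, then `a ^ p` and
`b ^ p` lie in `⟨d⟩` in `G`; expanding `[a, b ^ p]`, `[c, b ^ p]`, `[c, a ^ p]` and `[a ^ p, b]` in
`X` gives `|X'| ∣ p ^ 3` unless `u` has order `p`. In that case the same relations, read as
congruences between exponents of `u`, give `b ^ p = 1` and `a ^ p = d ^ (-(p choose 3))` in `G`. For
odd `p` the binomial coefficient is divisible by `p` exactly when `p ≠ 3`, which separates the two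
presentations. A presented group of order at most `p ^ 4` mapping onto `G` is isomorphic to `G`.
-/

section Commutators

variable {X Y : Type*} [Group X] [Group Y]

lemma mul_eq_mul_mul_pComm (x y : X) : x * y = y * (x * pComm x y) := by
  simp [pComm, mul_assoc]

lemma pComm_eq_one_iff_commute {x y : X} : pComm x y = 1 ↔ Commute x y := by
  rw [commute_iff_eq, mul_eq_mul_mul_pComm x y, mul_right_inj, mul_eq_left]

lemma pComm_inv (x y : X) : (pComm x y)⁻¹ = pComm y x := by
  simp [pComm, mul_assoc]

lemma map_pComm (f : X →* Y) (x y : X) : f (pComm x y) = pComm (f x) (f y) := by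
  simp [pComm]

lemma pComm_mem_commutator (x y : X) : pComm x y ∈ commutator X := by
  simpa only [pComm, commutatorElement_def, commutator_def, inv_inv] using
    Subgroup.commutator_mem_commutator (Subgroup.mem_top x⁻¹) (Subgroup.mem_top y⁻¹)

lemma mul_pComm_eq_conj (x y : X) : x * pComm x y = y⁻¹ * x * y := by
  simp [pComm, mul_assoc]

lemma pComm_mul_left (x y z : X) : pComm (x * y) z = y⁻¹ * pComm x z * y * pComm y z := by
  simp [pComm, mul_assoc]

lemma pComm_mul_right (x y z : X) : pComm x (y * z) = pComm x z * (z⁻¹ * pComm x y * z) := by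
  simp [pComm, mul_assoc]

lemma conj_eq_of_mem_center {z : X} (hz : z ∈ Subgroup.center X) (x : X) : x⁻¹ * z * x = z := by
  rw [mul_assoc, ← Subgroup.mem_center_iff.mp hz x, inv_mul_cancel_left]

lemma pComm_mul_left_of_mem_center {z : X} (hz : z ∈ Subgroup.center X) (x y : X) :
    pComm (x * z) y = pComm x y := by
  rw [pComm_mul_left, pComm_eq_one_iff_commute.mpr (Subgroup.mem_center_iff.mp hz y).symm, mul_one,
    mul_assoc, Subgroup.mem_center_iff.mp hz, inv_mul_cancel_left]

lemma pComm_mul_right_of_mem_center {z : X} (hz : z ∈ Subgroup.center X) (x y : X) :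
    pComm x (y * z) = pComm x y := by
  rw [← pComm_inv, pComm_mul_left_of_mem_center hz, pComm_inv]

lemma pComm_zpow_left {x y : X} (h : Commute x (pComm x y)) (n : ℤ) :
    pComm (x ^ n) y = pComm x y ^ n := by
  have hconj : (x * pComm x y) ^ n = x ^ n * pComm (x ^ n) y := by
    rw [mul_pComm_eq_conj, mul_pComm_eq_conj]
    simpa only [inv_inv] using conj_zpow (a := y⁻¹) (b := x) (i := n)
  rw [h.mul_zpow] at hconj
  exact (mul_left_cancel hconj).symm

lemma pComm_zpow_right {x y : X} (h : Commute y (pComm x y)) (n : ℤ) :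
    pComm x (y ^ n) = pComm x y ^ n := by
  rw [← pComm_inv, pComm_zpow_left (by rw [← pComm_inv]; exact h.inv_right), ← pComm_inv,
    inv_zpow, inv_inv]

lemma pComm_pow_right_of_commute {a b c d u : X} (hc : pComm a b = c) (hd : pComm c b = d)
    (hu : pComm d b = u) (hcd : Commute c d) (hub : Commute u b) (hud : Commute u d) (n : ℕ) :
    pComm a (b ^ n) = c ^ n * d ^ n.choose 2 * u ^ n.choose 3 := by
  have conj_a : SemiconjBy b (a * c) a := hc ▸ (mul_eq_mul_mul_pComm a b).symm
  have conj_c : SemiconjBy b (c * d) c := hd ▸ (mul_eq_mul_mul_pComm c b).symm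
  have conj_d : SemiconjBy b (d * u) d := hu ▸ (mul_eq_mul_mul_pComm d b).symm
  suffices h : a * b ^ n = b ^ n * (a * (c ^ n * d ^ n.choose 2 * u ^ n.choose 3)) by
    rw [mul_eq_mul_mul_pComm a (b ^ n)] at h
    exact mul_left_cancel (mul_left_cancel h)
  induction n with
  | zero => simp
  | succ n ih =>
    have conj_word := conj_a.mul_right (((conj_c.pow_right n).mul_right
      (conj_d.pow_right (n.choose 2))).mul_right (hub.symm.semiconjBy.pow_right (n.choose 3)))
    rw [pow_succ, ← mul_assoc, ih, mul_assoc, ← conj_word.eq, mul_assoc (b ^ n)]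
    congr 2
    rw [hcd.mul_pow, hud.symm.mul_pow, Nat.choose_succ_succ' n 1, Nat.choose_succ_succ' n 2,
      Nat.choose_one_right, pow_add d, pow_add u, pow_succ' c]
    simp only [mul_assoc]

lemma pComm_pow_left_of_commute {a b c e : X} (hc : pComm a b = c) (he : pComm c a = e)
    (hea : Commute e a) (hec : Commute e c) (n : ℕ) :
    pComm (a ^ n) b = c ^ n * e ^ n.choose 2 := by
  have conj_c : SemiconjBy a (c * e) c := he ▸ (mul_eq_mul_mul_pComm c a).symm
  suffices h : (a * c) ^ n = a ^ n * (c ^ n * e ^ n.choose 2) by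
    have hconj : (a * c) ^ n = a ^ n * pComm (a ^ n) b := by
      rw [← hc, mul_pComm_eq_conj, mul_pComm_eq_conj]
      simpa only [inv_inv] using conj_pow (a := b⁻¹) (b := a) (i := n)
    exact mul_left_cancel (hconj.symm.trans h)
  induction n with
  | zero => simp
  | succ n ih =>
    have conj_cn : a * (c ^ n * e ^ n) = c ^ n * a := by
      simpa only [hec.symm.mul_pow] using (conj_c.pow_right n).eq
    calc (a * c) ^ (n + 1) = a ^ n * c ^ n * (e ^ n.choose 2 * (a * c)) := by
          rw [pow_succ, ih]; simp only [mul_assoc]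
      _ = a ^ n * (c ^ n * a) * c * e ^ n.choose 2 := by
          rw [((hea.mul_right hec).pow_left _).eq]; simp only [mul_assoc]
      _ = a ^ n * a * c ^ n * (e ^ n * c) * e ^ n.choose 2 := by
          rw [← conj_cn]; simp only [mul_assoc]
      _ = a ^ (n + 1) * (c ^ (n + 1) * e ^ (n + 1).choose 2) := by
          rw [(hec.pow_left n).eq, Nat.choose_succ_succ' n 1, Nat.choose_one_right, pow_add e,
            pow_succ a, pow_succ c]
          simp only [mul_assoc]

end Commutators

section Generation

variable {X : Type*} [Group X] {S : Set X}

lemma mem_center_of_closure_eq_top (hS : Subgroup.closure S = ⊤) {x : X}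
    (h : ∀ s ∈ S, Commute x s) : x ∈ Subgroup.center X := by
  rw [← Subgroup.centralizer_univ, ← Subgroup.coe_top, ← hS, Subgroup.centralizer_closure]
  exact Subgroup.mem_centralizer_iff.mpr fun s hs => (h s hs).eq.symm

lemma mk_mem_center_of_closure_eq_top (hS : Subgroup.closure S = ⊤) (N : Subgroup X) [N.Normal]
    {x : X} (h : ∀ s ∈ S, pComm x s ∈ N) : (x : X ⧸ N) ∈ Subgroup.center (X ⧸ N) := by
  have hmap : Subgroup.closure (QuotientGroup.mk' N '' S) = ⊤ := by
    rw [← MonoidHom.map_closure, hS,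
      Subgroup.map_top_of_surjective _ (QuotientGroup.mk'_surjective N)]
  refine mem_center_of_closure_eq_top hmap ?_
  rintro _ ⟨s, hs, rfl⟩
  rw [← pComm_eq_one_iff_commute, ← QuotientGroup.mk'_apply, ← map_pComm, QuotientGroup.mk'_apply,
    QuotientGroup.eq_one_iff]
  exact h s hs

lemma commutator_le_of_closure_eq_top (hS : Subgroup.closure S = ⊤) (N : Subgroup X) [N.Normal]
    (h : ∀ s ∈ S, ∀ t ∈ S, pComm s t ∈ N) : commutator X ≤ N := by
  have hcenter : Subgroup.closure S ≤ (Subgroup.center (X ⧸ N)).comap (QuotientGroup.mk' N) :=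
    (Subgroup.closure_le _).mpr fun s hs => mk_mem_center_of_closure_eq_top hS N (h s hs)
  refine Subgroup.Normal.quotient_commutative_iff_commutator_le.mp ⟨⟨fun x y => ?_⟩⟩
  obtain ⟨y, rfl⟩ := QuotientGroup.mk_surjective y
  exact Subgroup.mem_center_iff.mp (hcenter (hS ▸ Subgroup.mem_top y)) x

lemma map_commutator_of_surjective {Y : Type*} [Group Y] {f : X →* Y}
    (hf : Function.Surjective f) : (commutator X).map f = commutator Y := by
  rw [commutator_def, Subgroup.map_commutator, Subgroup.map_top_of_surjective f hf, commutator_def]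

lemma normal_of_le_center {H : Subgroup X} (h : H ≤ Subgroup.center X) : H.Normal :=
  ⟨fun x hx g => by rwa [Subgroup.mem_center_iff.mp (h hx) g, mul_inv_cancel_right]⟩

lemma normal_sup_zpowers (hS : Subgroup.closure S = ⊤) (N : Subgroup X) [N.Normal] {x : X}
    (h : ∀ s ∈ S, pComm x s ∈ N) : (N ⊔ Subgroup.zpowers x).Normal := by
  have hmap : ((Subgroup.zpowers x).map (QuotientGroup.mk' N)).Normal := by
    refine normal_of_le_center ?_
    rw [MonoidHom.map_zpowers, Subgroup.zpowers_le]
    exact mk_mem_center_of_closure_eq_top hS N h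
  rw [← QuotientGroup.comap_map_mk']
  exact hmap.comap _

lemma card_mul_relIndex_of_le {H K : Subgroup X} (h : H ≤ K) :
    Nat.card H * H.relIndex K = Nat.card K := by
  simpa only [Subgroup.relIndex_bot_left] using
    Subgroup.relIndex_mul_relIndex ⊥ H K bot_le h

lemma card_sup_zpowers_dvd (N : Subgroup X) [N.Normal] {x : X} {k : ℕ} (hx : x ^ k ∈ N) :
    Nat.card ↥(N ⊔ Subgroup.zpowers x) ∣ Nat.card N * k := by
  rw [← card_mul_relIndex_of_le (le_sup_left : N ≤ N ⊔ Subgroup.zpowers x),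
    Subgroup.relIndex_sup_left, ← QuotientGroup.ker_mk' N, Subgroup.relIndex_ker,
    MonoidHom.map_zpowers, Nat.card_zpowers, QuotientGroup.ker_mk']
  refine mul_dvd_mul_left _ (orderOf_dvd_of_pow_eq_one ?_)
  rwa [← map_pow, QuotientGroup.mk'_apply, QuotientGroup.eq_one_iff]

lemma eq_of_lt_of_le_of_relIndex_prime {H K L : Subgroup X} (hHK : H < K) (hKL : K ≤ L)
    (hp : (H.relIndex L).Prime) : K = L := by
  rw [← Subgroup.relIndex_mul_relIndex H K L hHK.le hKL, Nat.prime_mul_iff] at hp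
  rcases hp with ⟨-, h⟩ | ⟨-, h⟩
  · exact le_antisymm hKL (Subgroup.relIndex_eq_one.mp h)
  · exact absurd (Subgroup.relIndex_eq_one.mp h) hHK.not_ge

lemma pComm_mem_of_mem_pair_union_center {N : Subgroup X} {x a b : X} (ha : pComm x a ∈ N)
    (hb : pComm x b ∈ N) : ∀ s ∈ {a, b} ∪ (Subgroup.center X : Set X), pComm x s ∈ N := by
  rintro s ((rfl | rfl) | hs)
  · exact ha
  · exact hb
  · rw [pComm_eq_one_iff_commute.mpr (Subgroup.mem_center_iff.mp hs x)]
    exact one_mem N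

end Generation

/-- The commutator relations satisfied by two elements `a, b` which generate `X` modulo its centre
when `[a, b, a]` and `[a, b, b, b]` are central and `[a, b]` commutes with `[a, b, b]`: the basic
commutators are `c = [a, b]`, `d = [a, b, b]`, `e = [a, b, a]` and `u = [a, b, b, b]`. -/
structure CommutatorTower {X : Type*} [Group X] (a b c d e u : X) : Prop where
  closure_eq_top : Subgroup.closure ({a, b} ∪ (Subgroup.center X : Set X)) = ⊤
  pComm_ab : pComm a b = c
  pComm_cb : pComm c b = d
  pComm_ca : pComm c a = e
  pComm_db : pComm d b = u
  commute_da : Commute d a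
  commute_cd : Commute c d
  e_mem_center : e ∈ Subgroup.center X
  u_mem_center : u ∈ Subgroup.center X

namespace CommutatorTower

open Subgroup (zpowers mem_zpowers mem_sup_left mem_sup_right)

variable {X : Type*} [Group X] {a b c d e u : X}

lemma of_closure_pair (hgen : Subgroup.closure {a, b} = ⊤)
    (hca : pComm (pComm a b) a = 1) (hda : Commute (pComm (pComm a b) b) a)
    (hdb : pComm (pComm (pComm a b) b) b = 1) :
    CommutatorTower a b (pComm a b) (pComm (pComm a b) b) 1 1 where
  closure_eq_top := by rw [Subgroup.closure_union, hgen, top_sup_eq]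
  pComm_ab := rfl
  pComm_cb := rfl
  pComm_ca := hca
  pComm_db := hdb
  commute_da := hda
  commute_cd := by
    have hd : pComm (pComm a b) b ∈ Subgroup.center X := mem_center_of_closure_eq_top hgen <| by
      rintro s (rfl | rfl)
      · exact hda
      · exact pComm_eq_one_iff_commute.mp hdb
    exact Subgroup.mem_center_iff.mp hd _
  e_mem_center := one_mem _
  u_mem_center := one_mem _

lemma commute_e (h : CommutatorTower a b c d e u) (x : X) : Commute e x :=
  (Subgroup.mem_center_iff.mp h.e_mem_center x).symm

lemma commute_u (h : CommutatorTower a b c d e u) (x : X) : Commute u x :=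
  (Subgroup.mem_center_iff.mp h.u_mem_center x).symm

lemma pComm_a_pow_b (h : CommutatorTower a b c d e u) (n : ℕ) :
    pComm a (b ^ n) = c ^ n * d ^ n.choose 2 * u ^ n.choose 3 :=
  pComm_pow_right_of_commute h.pComm_ab h.pComm_cb h.pComm_db h.commute_cd (h.commute_u b)
    (h.commute_u d) n

lemma pComm_c_pow_b (h : CommutatorTower a b c d e u) (n : ℕ) :
    pComm c (b ^ n) = d ^ n * u ^ n.choose 2 := by
  simpa using pComm_pow_right_of_commute h.pComm_cb h.pComm_db
    (pComm_eq_one_iff_commute.mpr (h.commute_u b)) (h.commute_u d).symm (Commute.one_left b)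
    (Commute.one_left u) n

lemma pComm_d_zpow_b (h : CommutatorTower a b c d e u) (n : ℤ) : pComm d (b ^ n) = u ^ n := by
  rw [pComm_zpow_right (by rw [h.pComm_db]; exact (h.commute_u b).symm), h.pComm_db]

lemma pComm_zpow_d_b (h : CommutatorTower a b c d e u) (n : ℤ) : pComm (d ^ n) b = u ^ n := by
  rw [pComm_zpow_left (by rw [h.pComm_db]; exact (h.commute_u d).symm), h.pComm_db]

lemma pComm_zpow_c_b (h : CommutatorTower a b c d e u) (n : ℤ) : pComm (c ^ n) b = d ^ n := by
  rw [pComm_zpow_left (by rw [h.pComm_cb]; exact h.commute_cd), h.pComm_cb]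

lemma pComm_c_zpow_a (h : CommutatorTower a b c d e u) (n : ℤ) : pComm c (a ^ n) = e ^ n := by
  rw [pComm_zpow_right (by rw [h.pComm_ca]; exact (h.commute_e a).symm), h.pComm_ca]

lemma pComm_pow_a_b (h : CommutatorTower a b c d e u) (n : ℕ) :
    pComm (a ^ n) b = c ^ n * e ^ n.choose 2 :=
  pComm_pow_left_of_commute h.pComm_ab h.pComm_ca (h.commute_e a) (h.commute_e c) n

lemma normal_zpowers_u_sup_e (h : CommutatorTower a b c d e u) : (zpowers u ⊔ zpowers e).Normal :=
  normal_of_le_center (sup_le (Subgroup.zpowers_le.mpr h.u_mem_center)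
    (Subgroup.zpowers_le.mpr h.e_mem_center))

lemma normal_zpowers_sup_d (h : CommutatorTower a b c d e u) :
    (zpowers u ⊔ zpowers e ⊔ zpowers d).Normal := by
  have := h.normal_zpowers_u_sup_e
  refine normal_sup_zpowers h.closure_eq_top _ (pComm_mem_of_mem_pair_union_center ?_ ?_)
  · rw [pComm_eq_one_iff_commute.mpr h.commute_da]
    exact one_mem _
  · rw [h.pComm_db]
    exact mem_sup_left (mem_zpowers u)

lemma normal_zpowers_sup_c (h : CommutatorTower a b c d e u) :
    (zpowers u ⊔ zpowers e ⊔ zpowers d ⊔ zpowers c).Normal := by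
  have := h.normal_zpowers_sup_d
  refine normal_sup_zpowers h.closure_eq_top _ (pComm_mem_of_mem_pair_union_center ?_ ?_)
  · rw [h.pComm_ca]
    exact mem_sup_left (mem_sup_right (mem_zpowers e))
  · rw [h.pComm_cb]
    exact mem_sup_right (mem_zpowers d)

lemma commutator_le (h : CommutatorTower a b c d e u) :
    commutator X ≤ zpowers u ⊔ zpowers e ⊔ zpowers d ⊔ zpowers c := by
  have := h.normal_zpowers_sup_c
  have hc : pComm a b ∈ zpowers u ⊔ zpowers e ⊔ zpowers d ⊔ zpowers c := by
    rw [h.pComm_ab]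
    exact mem_sup_right (mem_zpowers c)
  have pComm_self_mem (x : X) : pComm x x ∈ zpowers u ⊔ zpowers e ⊔ zpowers d ⊔ zpowers c := by
    rw [pComm_eq_one_iff_commute.mpr (Commute.refl x)]
    exact one_mem _
  refine commutator_le_of_closure_eq_top h.closure_eq_top _ ?_
  rintro s ((rfl | rfl) | hs)
  · exact pComm_mem_of_mem_pair_union_center (pComm_self_mem s) hc
  · exact pComm_mem_of_mem_pair_union_center (pComm_inv a s ▸ inv_mem hc) (pComm_self_mem s)
  · intro t _
    rw [pComm_eq_one_iff_commute.mpr (Subgroup.mem_center_iff.mp hs t).symm]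
    exact one_mem _

lemma card_commutator_dvd (h : CommutatorTower a b c d e u) {l m : ℕ} (hd : d ^ l = 1)
    (hc : c ^ m ∈ zpowers d) : Nat.card (commutator X) ∣ orderOf u * orderOf e * l * m := by
  have : (zpowers u).Normal := normal_of_le_center (Subgroup.zpowers_le.mpr h.u_mem_center)
  have := h.normal_zpowers_u_sup_e
  have := h.normal_zpowers_sup_d
  have he : Nat.card ↥(zpowers u ⊔ zpowers e) ∣ orderOf u * orderOf e := by
    rw [← Nat.card_zpowers u]
    exact card_sup_zpowers_dvd _ (by rw [pow_orderOf_eq_one]; exact one_mem _)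
  have hd := card_sup_zpowers_dvd (zpowers u ⊔ zpowers e) (hd ▸ one_mem _)
  have hc := card_sup_zpowers_dvd (zpowers u ⊔ zpowers e ⊔ zpowers d) (mem_sup_right hc)
  exact (Subgroup.card_dvd_of_le h.commutator_le).trans <| hc.trans <|
    mul_dvd_mul_right (hd.trans (mul_dvd_mul_right he l)) m

lemma pow_eq_one_of_b_pow_eq_one (h : CommutatorTower a b c d 1 1) {n : ℕ} (hb : b ^ n = 1) :
    d ^ n = 1 := by
  have hd := h.pComm_c_pow_b n
  rwa [hb, pComm_eq_one_iff_commute.mpr (Commute.one_right c), one_pow, mul_one, eq_comm] at hd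

lemma pow_mem_zpowers_of_b_pow_eq_one (h : CommutatorTower a b c d 1 1) {n : ℕ}
    (hb : b ^ n = 1) : c ^ n ∈ zpowers d := by
  have hc := h.pComm_a_pow_b n
  rw [hb, pComm_eq_one_iff_commute.mpr (Commute.one_right a), one_pow, mul_one] at hc
  rw [eq_inv_of_mul_eq_one_left hc.symm]
  exact inv_mem (pow_mem (mem_zpowers d) _)

lemma card_dvd_of_b_pow_eq_one (h : CommutatorTower a b c d 1 1)
    (hgen : Subgroup.closure {a, b} = ⊤) {n : ℕ} (ha : a ^ n ∈ zpowers d) (hb : b ^ n = 1) :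
    Nat.card X ∣ n ^ 4 := by
  have : (commutator X ⊔ zpowers a).Normal := .of_commutator_le X le_sup_left
  have top_eq : commutator X ⊔ zpowers a ⊔ zpowers b = ⊤ := by
    rw [eq_top_iff, ← hgen, Subgroup.closure_le, Set.pair_subset_iff]
    exact ⟨mem_sup_left (mem_sup_right (mem_zpowers a)), mem_sup_right (mem_zpowers b)⟩
  have d_mem : d ∈ commutator X := h.pComm_cb ▸ pComm_mem_commutator c b
  have card_commutator := h.card_commutator_dvd (h.pow_eq_one_of_b_pow_eq_one hb)
    (h.pow_mem_zpowers_of_b_pow_eq_one hb)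
  have card_a := card_sup_zpowers_dvd (commutator X) (Subgroup.zpowers_le.mpr d_mem ha)
  have card_b := card_sup_zpowers_dvd (commutator X ⊔ zpowers a) (hb ▸ one_mem _)
  rw [top_eq, Subgroup.card_top] at card_b
  calc Nat.card X ∣ orderOf (1 : X) * orderOf (1 : X) * n * n * n * n :=
        card_b.trans (mul_dvd_mul_right (card_a.trans (mul_dvd_mul_right card_commutator n)) n)
    _ = n ^ 4 := by rw [orderOf_one]; ring

end CommutatorTower

section CentralExtension

variable {X G : Type*} [Group X] [Group G]

/-- An instance of the Hall–Witt identity: conjugating the central elements `[d, a]` and `[c, a]`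
by `b` does not change them, but replaces `a, c, d` by `a * c`, `c * d`, `d * [d, b]`. -/
lemma commute_of_pComm_mem_center {a b c d : X} (hc : pComm a b = c) (hd : pComm c b = d)
    (he : pComm c a ∈ Subgroup.center X) (hu : pComm d b ∈ Subgroup.center X)
    (hv : pComm d a ∈ Subgroup.center X) : Commute d a ∧ Commute c d := by
  have conj_pComm (x y : X) : pComm (x * pComm x b) (y * pComm y b) = b⁻¹ * pComm x y * b := by
    simp [pComm, mul_assoc]
  have pComm_mul_c {x : X} (hx : pComm x a ∈ Subgroup.center X) :
      pComm x (a * c) = pComm x c * pComm x a := by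
    rw [pComm_mul_right, conj_eq_of_mem_center hx]
  have hcd : Commute c d := by
    have hconj := conj_pComm d a
    rw [hc, pComm_mul_left_of_mem_center hu, conj_eq_of_mem_center hv, pComm_mul_c hv,
      mul_eq_right] at hconj
    exact (pComm_eq_one_iff_commute.mp hconj).symm
  refine ⟨?_, hcd⟩
  have hconj := conj_pComm c a
  rw [hc, hd, pComm_mul_left, pComm_mul_c he, pComm_mul_c hv,
    pComm_eq_one_iff_commute.mpr (Commute.refl c), pComm_eq_one_iff_commute.mpr hcd.symm, one_mul,
    one_mul, conj_eq_of_mem_center he, conj_eq_of_mem_center he, mul_eq_left] at hconj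
  exact pComm_eq_one_iff_commute.mp hconj

lemma pComm_eq_pComm_of_map_eq {π : X →* G} (hker : π.ker ≤ Subgroup.center X) {x x' y y' : X}
    (hx : π x = π x') (hy : π y = π y') : pComm x y = pComm x' y' := by
  obtain ⟨z, hz, rfl⟩ : ∃ z ∈ π.ker, x * z = x' := ⟨x⁻¹ * x', by simp [hx], by simp⟩
  obtain ⟨w, hw, rfl⟩ : ∃ w ∈ π.ker, y * w = y' := ⟨y⁻¹ * y', by simp [hy], by simp⟩
  rw [pComm_mul_left_of_mem_center (hker hz), pComm_mul_right_of_mem_center (hker hw)]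

lemma CommutatorTower.lift {π : X →* G} (hker : π.ker ≤ Subgroup.center X) {a b c d : X}
    (h : CommutatorTower (π a) (π b) (π c) (π d) 1 1)
    (hgen : Subgroup.closure {π a, π b} = ⊤) (hc : pComm a b = c) (hd : pComm c b = d) :
    CommutatorTower a b c d (pComm c a) (pComm d b) := by
  have he : pComm c a ∈ Subgroup.center X :=
    hker (by rw [MonoidHom.mem_ker, map_pComm, h.pComm_ca])
  have hu : pComm d b ∈ Subgroup.center X :=
    hker (by rw [MonoidHom.mem_ker, map_pComm, h.pComm_db])
  have hv : pComm d a ∈ Subgroup.center X :=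
    hker (by rw [MonoidHom.mem_ker, map_pComm, pComm_eq_one_iff_commute.mpr h.commute_da])
  obtain ⟨hda, hcd⟩ := commute_of_pComm_mem_center hc hd he hu hv
  refine ⟨?_, hc, hd, rfl, rfl, hda, hcd, he, hu⟩
  rw [Subgroup.closure_union, Subgroup.closure_eq, eq_top_iff]
  calc ⊤ ≤ (Subgroup.closure {π a, π b}).comap π := by rw [hgen, Subgroup.comap_top]
    _ = Subgroup.closure {a, b} ⊔ π.ker := by
        rw [← Subgroup.comap_map_eq, MonoidHom.map_closure, Set.image_pair]
    _ ≤ Subgroup.closure {a, b} ⊔ Subgroup.center X := sup_le_sup_left hker _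

namespace CommutatorTower

variable {a b c d e u : X} {π : X →* G} {n : ℕ}

lemma pow_relations_of_map_b_pow (h : CommutatorTower a b c d e u)
    (hker : π.ker ≤ Subgroup.center X) {j : ℤ} (hb : π b ^ n = π d ^ j) :
    u ^ n = 1 ∧ u ^ j = 1 ∧ d ^ n * u ^ n.choose 2 = 1 ∧
      c ^ n * d ^ n.choose 2 * u ^ n.choose 3 = 1 := by
  have hbd : π (b ^ n) = π (d ^ j) := by rw [map_pow, map_zpow, hb]
  have pComm_b_pow {x : X} (hx : Commute x d) : pComm x (b ^ n) = 1 := by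
    rw [pComm_eq_pComm_of_map_eq hker rfl hbd, pComm_eq_one_iff_commute]
    exact hx.zpow_right j
  refine ⟨?_, ?_, ?_, ?_⟩
  · rw [← zpow_natCast, ← h.pComm_d_zpow_b, zpow_natCast, pComm_b_pow (Commute.refl d)]
  · rw [← h.pComm_zpow_d_b, ← pComm_eq_pComm_of_map_eq hker hbd rfl, pComm_eq_one_iff_commute]
    exact Commute.pow_self b n
  · rw [← h.pComm_c_pow_b, pComm_b_pow h.commute_cd]
  · rw [← h.pComm_a_pow_b, pComm_b_pow h.commute_da.symm]

lemma pow_relations_of_map_a_pow (h : CommutatorTower a b c d e u)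
    (hker : π.ker ≤ Subgroup.center X) {i : ℤ} (ha : π a ^ n = π d ^ i) :
    e ^ n = 1 ∧ c ^ n * e ^ n.choose 2 = u ^ i := by
  have had : π (a ^ n) = π (d ^ i) := by rw [map_pow, map_zpow, ha]
  constructor
  · rw [← zpow_natCast, ← h.pComm_c_zpow_a, zpow_natCast, pComm_eq_pComm_of_map_eq hker rfl had,
      pComm_eq_one_iff_commute]
    exact h.commute_cd.zpow_right i
  · rw [← h.pComm_pow_a_b, pComm_eq_pComm_of_map_eq hker had rfl, h.pComm_zpow_d_b]

end CommutatorTower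

end CentralExtension

lemma pow_choose_two_eq_one {X : Type*} [Group X] {p : ℕ} (hp : p.Prime) (hp2 : p ≠ 2) {x : X}
    (hx : x ^ p = 1) : x ^ p.choose 2 = 1 := by
  obtain ⟨k, hk⟩ := hp.dvd_choose_self two_ne_zero (hp.two_le.lt_of_ne' hp2)
  rw [hk, pow_mul, hx, one_pow]

/-- Generators of a `p`-group of maximal class and order `p ^ 4`, adapted to the lower central
series: `a` centralises the derived subgroup, and `d = [a, b, b]` generates the subgroup of
elements of the derived subgroup fixed by `b`. -/
structure AdaptedPair {G : Type*} [Group G] (p : ℕ) (a b c d : G) : Prop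
    extends CommutatorTower a b c d 1 1 where
  closure_pair : Subgroup.closure {a, b} = ⊤
  orderOf_d : orderOf d = p
  commute_a_of_mem_commutator : ∀ x ∈ commutator G, Commute x a
  mem_zpowers_d_of_commute_b : ∀ x ∈ commutator G, Commute x b → x ∈ Subgroup.zpowers d
  pow_mem_commutator : ∀ x : G, x ^ p ∈ commutator G

namespace AdaptedPair

section

variable {G : Type*} [Group G] {p : ℕ} {a b c d : G}

lemma d_pow_eq_one (h : AdaptedPair p a b c d) : d ^ p = 1 :=
  h.orderOf_d ▸ pow_orderOf_eq_one d

lemma exists_b_pow_eq (h : AdaptedPair p a b c d) : ∃ j : ℤ, b ^ p = d ^ j := by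
  obtain ⟨j, hj⟩ := h.mem_zpowers_d_of_commute_b _ (h.pow_mem_commutator b) (Commute.pow_self b p)
  exact ⟨j, hj.symm⟩

lemma c_pow_mul_d_pow_eq_one (h : AdaptedPair p a b c d) : c ^ p * d ^ p.choose 2 = 1 := by
  have hc := h.pComm_a_pow_b p
  rwa [one_pow, mul_one, pComm_eq_one_iff_commute.mpr
    (h.commute_a_of_mem_commutator _ (h.pow_mem_commutator b)).symm, eq_comm] at hc

lemma exists_a_pow_eq (h : AdaptedPair p a b c d) (hp : p.Prime) (hp2 : p ≠ 2) :
    ∃ i : ℤ, a ^ p = d ^ i := by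
  have hc : c ^ p = 1 := by
    simpa only [pow_choose_two_eq_one hp hp2 h.d_pow_eq_one, mul_one] using h.c_pow_mul_d_pow_eq_one
  have hab : Commute (a ^ p) b := by
    rw [← pComm_eq_one_iff_commute, h.pComm_pow_a_b, hc, one_pow, mul_one]
  obtain ⟨i, hi⟩ := h.mem_zpowers_d_of_commute_b _ (h.pow_mem_commutator a) hab
  exact ⟨i, hi.symm⟩

lemma exists_a_sq_eq (h : AdaptedPair 2 a b c d) : ∃ m : ℤ, a ^ 2 = c ^ m := by
  have hcd : c ^ 2 * d = 1 := by simpa using h.c_pow_mul_d_pow_eq_one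
  have d_mem : d ∈ Subgroup.zpowers c :=
    eq_inv_of_mul_eq_one_right hcd ▸ inv_mem (pow_mem (Subgroup.mem_zpowers c) 2)
  have commutator_le : commutator G ≤ Subgroup.zpowers c :=
    h.commutator_le.trans (by simp [d_mem])
  obtain ⟨m, hm⟩ := commutator_le (h.pow_mem_commutator a)
  exact ⟨m, hm.symm⟩

end

variable {X G : Type*} [Group X] [Group G] {p : ℕ} {π : X →* G} {a b c d e u : X}

lemma pow_eq_of_not_card_commutator_dvd_of_ne_two (h : AdaptedPair p (π a) (π b) (π c) (π d))
    (ht : CommutatorTower a b c d e u) (hker : π.ker ≤ Subgroup.center X) (hp : p.Prime)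
    (hp2 : p ≠ 2) (hX : ¬ Nat.card (commutator X) ∣ p ^ 3) :
    π b ^ p = 1 ∧ π a ^ p * π d ^ p.choose 3 = 1 := by
  obtain ⟨i, hi⟩ := h.exists_a_pow_eq hp hp2
  obtain ⟨j, hj⟩ := h.exists_b_pow_eq
  obtain ⟨u_pow, u_zpow_j, d_pow, c_pow⟩ := ht.pow_relations_of_map_b_pow hker hj
  obtain ⟨e_pow, c_pow_eq⟩ := ht.pow_relations_of_map_a_pow hker hi
  rw [pow_choose_two_eq_one hp hp2 u_pow, mul_one] at d_pow
  rw [pow_choose_two_eq_one hp hp2 e_pow, mul_one] at c_pow_eq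
  rw [pow_choose_two_eq_one hp hp2 d_pow, mul_one, c_pow_eq, ← zpow_natCast, ← zpow_add] at c_pow
  have u_ne_one : u ≠ 1 := by
    rintro rfl
    have c_pow_mem : c ^ p ∈ Subgroup.zpowers d := by rw [c_pow_eq, one_zpow]; exact one_mem _
    refine hX ((ht.card_commutator_dvd d_pow c_pow_mem).trans ?_)
    calc orderOf (1 : X) * orderOf e * p * p ∣ 1 * p * p * p := by
          rw [orderOf_one]
          gcongr
          exact orderOf_dvd_of_pow_eq_one e_pow
      _ = p ^ 3 := by ring
  have : Fact p.Prime := ⟨hp⟩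
  have orderOf_u : orderOf u = p := orderOf_eq_prime u_pow u_ne_one
  have zpow_d_eq_one {k : ℤ} (hk : u ^ k = 1) : π d ^ k = 1 := by
    rwa [← orderOf_dvd_iff_zpow_eq_one, h.orderOf_d, ← orderOf_u, orderOf_dvd_iff_zpow_eq_one]
  refine ⟨hj.trans (zpow_d_eq_one u_zpow_j), ?_⟩
  rw [hi, ← zpow_natCast (π d), ← zpow_add, zpow_d_eq_one c_pow]

lemma card_commutator_dvd_of_two (h : AdaptedPair 2 (π a) (π b) (π c) (π d))
    (ht : CommutatorTower a b c d e u) (hker : π.ker ≤ Subgroup.center X) :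
    Nat.card (commutator X) ∣ 2 ^ 3 := by
  obtain ⟨j, hj⟩ := h.exists_b_pow_eq
  obtain ⟨m, hm⟩ := h.exists_a_sq_eq
  obtain ⟨u_sq, -, hdu, hcd⟩ := ht.pow_relations_of_map_b_pow hker hj
  simp only [Nat.choose_self, pow_one, Nat.choose_eq_zero_of_lt (show 2 < 3 by norm_num), pow_zero,
    mul_one] at hdu hcd
  have hce : c ^ 2 * e = d ^ m := by
    rw [← ht.pComm_zpow_c_b, ← pow_one e, ← Nat.choose_self 2, ← ht.pComm_pow_a_b]
    exact pComm_eq_pComm_of_map_eq hker (by rw [map_pow, map_zpow, hm]) rfl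
  have c_sq_mem : c ^ 2 ∈ Subgroup.zpowers c := pow_mem (Subgroup.mem_zpowers c) 2
  have d_mem : d ∈ Subgroup.zpowers c := eq_inv_of_mul_eq_one_right hcd ▸ inv_mem c_sq_mem
  have u_mem : u ∈ Subgroup.zpowers c :=
    eq_inv_of_mul_eq_one_right hdu ▸ inv_mem (pow_mem d_mem 2)
  have e_mem : e ∈ Subgroup.zpowers c :=
    (Subgroup.mul_mem_cancel_left _ c_sq_mem).mp (hce ▸ zpow_mem d_mem m)
  have commutator_le : commutator X ≤ Subgroup.zpowers c :=
    ht.commutator_le.trans (by simp [d_mem, u_mem, e_mem])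
  have c_pow_eight : c ^ 8 = 1 :=
    calc c ^ 8 = (c ^ 2) ^ 4 := by rw [← pow_mul]
      _ = ((d ^ 2)⁻¹) ^ 2 := by
          rw [eq_inv_of_mul_eq_one_left hcd, inv_pow, inv_pow, ← pow_mul]
      _ = 1 := by rw [← eq_inv_of_mul_eq_one_right hdu, u_sq]
  refine (Subgroup.card_dvd_of_le commutator_le).trans ?_
  rw [Nat.card_zpowers]
  exact orderOf_dvd_of_pow_eq_one c_pow_eight

lemma pow_eq_of_not_card_commutator_dvd {a b c d : G} (h : AdaptedPair p a b c d) (hp : p.Prime)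
    (hπ : Function.Surjective π) (hker : π.ker ≤ Subgroup.center X)
    (hX : ¬ Nat.card (commutator X) ∣ p ^ 3) :
    p ≠ 2 ∧ b ^ p = 1 ∧ a ^ p * d ^ p.choose 3 = 1 := by
  obtain ⟨a, rfl⟩ := hπ a
  obtain ⟨b, rfl⟩ := hπ b
  obtain rfl : π (pComm a b) = c := by rw [map_pComm, h.pComm_ab]
  obtain rfl : π (pComm (pComm a b) b) = d := by rw [map_pComm, h.pComm_cb]
  have ht := h.toCommutatorTower.lift hker h.closure_pair rfl rfl
  have hp2 : p ≠ 2 := by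
    rintro rfl
    exact hX (h.card_commutator_dvd_of_two ht hker)
  exact ⟨hp2, h.pow_eq_of_not_card_commutator_dvd_of_ne_two ht hker hp hp2 hX⟩

end AdaptedPair

section SchurMultiplier

variable (G : Type*) [Group G]

instance normal_presentationKernel : (presentationKernel G).Normal :=
  inferInstanceAs (FreeGroup.lift (id : G → G)).ker.Normal

lemma freeGroup_lift_id_surjective : Function.Surjective (FreeGroup.lift (id : G → G)) :=
  fun g => ⟨FreeGroup.of g, FreeGroup.lift_apply_of⟩

/-- The central extension `F / [F, R]` of `G = F / R`, where `F = FreeGroup G`; the part of its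
kernel inside the derived subgroup is the Schur multiplier. -/
abbrev FreeCentralExtension : Type _ :=
  FreeGroup G ⧸ ⁅(⊤ : Subgroup (FreeGroup G)), presentationKernel G⁆

namespace FreeCentralExtension

/-- The projection `F / [F, R] → F / R = G`. -/
def proj : FreeCentralExtension G →* G :=
  QuotientGroup.lift _ (FreeGroup.lift id) (Subgroup.commutator_le_right ⊤ (presentationKernel G))

lemma proj_surjective : Function.Surjective (proj G) :=
  QuotientGroup.lift_surjective_of_surjective _ _ (freeGroup_lift_id_surjective G) _

lemma ker_proj_le_center : (proj G).ker ≤ Subgroup.center (FreeCentralExtension G) := by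
  have ker_eq : (proj G).ker = (presentationKernel G).map (QuotientGroup.mk' _) :=
    QuotientGroup.ker_lift _ _ _
  rw [ker_eq, ← Subgroup.commutator_top_left_eq_bot_iff_le_center,
    ← Subgroup.map_top_of_surjective _ (QuotientGroup.mk'_surjective _), ← Subgroup.map_commutator,
    QuotientGroup.map_mk'_self]

lemma card_commutator :
    Nat.card (commutator (FreeCentralExtension G)) =
      Nat.card (SchurMultiplier G) * Nat.card (commutator G) := by
  set F := FreeGroup G
  set R := presentationKernel G
  set N := ⁅(⊤ : Subgroup F), R⁆
  have hNR : N ≤ R := Subgroup.commutator_le_right ⊤ R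
  have hNF : N ≤ commutator F := Subgroup.commutator_mono le_rfl le_top
  have card_X : Nat.card (commutator (FreeCentralExtension G)) = N.relIndex (commutator F) := by
    rw [← map_commutator_of_surjective (QuotientGroup.mk'_surjective N), ← Subgroup.relIndex_ker,
      QuotientGroup.ker_mk']
  have card_G : Nat.card (commutator G) = (R ⊓ commutator F).relIndex (commutator F) := by
    rw [Subgroup.inf_relIndex_right,
      ← map_commutator_of_surjective (freeGroup_lift_id_surjective G), ← Subgroup.relIndex_ker]
    rfl
  have card_M : Nat.card (SchurMultiplier G) = N.relIndex (R ⊓ commutator F) := rfl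
  rw [card_X, card_G, card_M, Subgroup.relIndex_mul_relIndex _ _ _ (le_inf hNR hNF) inf_le_right]

end FreeCentralExtension

end SchurMultiplier

section Nilpotent

variable {G : Type*} [Group G] [Group.IsNilpotent G]

lemma commutator_le_of_isCoatom {M : Subgroup G} (hM : IsCoatom M) : commutator G ≤ M := by
  have : M.Normal :=
    Subgroup.NormalizerCondition.normal_of_coatom M Group.normalizerCondition_of_isNilpotent hM
  obtain ⟨g, -, hg⟩ := SetLike.exists_of_lt hM.lt_top
  have pComm_mem {x : G} (hx : x ∈ M) (y : G) : pComm x y ∈ M := by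
    rw [pComm, mul_assoc, mul_assoc, ← mul_assoc y⁻¹]
    exact mul_mem (inv_mem hx) (this.conj_mem' x hx y)
  have hgen : Subgroup.closure ({g} ∪ (M : Set G)) = ⊤ := by
    rw [Subgroup.closure_union, Subgroup.closure_eq]
    exact hM.2 _ (right_lt_sup.mpr fun h => hg (h (Subgroup.mem_closure_singleton_self g)))
  refine commutator_le_of_closure_eq_top hgen M ?_
  rintro s (rfl | hs) t (rfl | ht)
  · rw [pComm_eq_one_iff_commute.mpr (Commute.refl _)]
    exact one_mem M
  · rw [← pComm_inv]
    exact inv_mem (pComm_mem ht s)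
  all_goals exact pComm_mem hs _

lemma eq_top_of_sup_commutator_eq_top [Finite G] {H : Subgroup G} (h : H ⊔ commutator G = ⊤) :
    H = ⊤ := by
  have commutator_le_frattini : commutator G ≤ frattini G :=
    le_iInf₂ fun _ hM => commutator_le_of_isCoatom hM
  have sup_frattini : H ⊔ frattini G = ⊤ :=
    top_le_iff.mp (h.ge.trans (sup_le_sup_left commutator_le_frattini H))
  exact frattini_nongenerating sup_frattini

lemma zpowers_sup_commutator_ne_top [Finite G] (hG' : commutator G ≠ ⊥) (g : G) :
    Subgroup.zpowers g ⊔ commutator G ≠ ⊤ := by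
  intro h
  have hgen := eq_top_of_sup_commutator_eq_top h
  rw [Subgroup.zpowers_eq_closure] at hgen
  refine hG' (le_bot_iff.mp (commutator_le_of_closure_eq_top hgen ⊥ ?_))
  rintro s rfl t rfl
  exact pComm_eq_one_iff_commute.mpr (Commute.refl _)

variable {p : ℕ} [Finite G]

lemma pow_mem_commutator_of_index_eq_sq (hp : p.Prime) (hG' : commutator G ≠ ⊥)
    (hindex : (commutator G).index = p ^ 2) (g : G) : g ^ p ∈ commutator G := by
  have not_isCyclic : ¬ IsCyclic (G ⧸ commutator G) := by
    rw [isCyclic_iff_exists_zpowers_eq_top]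
    rintro ⟨x, hx⟩
    obtain ⟨x, rfl⟩ := QuotientGroup.mk'_surjective _ x
    apply zpowers_sup_commutator_ne_top hG' x
    rw [sup_comm, ← QuotientGroup.comap_map_mk', MonoidHom.map_zpowers, hx, Subgroup.comap_top]
  rw [not_isCyclic_iff_exponent_eq_prime hp hindex] at not_isCyclic
  rw [← QuotientGroup.eq_one_iff, QuotientGroup.mk_pow, ← not_isCyclic]
  exact Monoid.pow_exponent_eq_one _

lemma exists_closure_pair_eq_top (hp : p.Prime) (hG' : commutator G ≠ ⊥)
    (hindex : (commutator G).index = p ^ 2) {a : G} (ha : a ∉ commutator G) :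
    ∃ b, Subgroup.closure {a, b} = ⊤ := by
  set L := Subgroup.zpowers a ⊔ commutator G with hL
  have hlt : commutator G < L := right_lt_sup.mpr fun h => ha (h (Subgroup.mem_zpowers a))
  have hL_ne_top : L ≠ ⊤ := zpowers_sup_commutator_ne_top hG' a
  have hL_prime : L.index.Prime := by
    rw [← Subgroup.relIndex_mul_index hlt.le, hp.mul_eq_prime_sq_iff
      (mt Subgroup.relIndex_eq_one.mp hlt.not_ge) (mt Subgroup.index_eq_one.mp hL_ne_top)] at hindex
    exact hindex.2 ▸ hp
  obtain ⟨b, -, hb⟩ := SetLike.exists_of_lt hL_ne_top.lt_top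
  refine ⟨b, eq_top_of_sup_commutator_eq_top (eq_of_lt_of_le_of_relIndex_prime (H := L) ?_ le_top
    (by rwa [Subgroup.relIndex_top_right]))⟩
  have a_mem : a ∈ Subgroup.closure {a, b} := Subgroup.subset_closure (Set.mem_insert _ _)
  have b_mem : b ∈ Subgroup.closure {a, b} := Subgroup.subset_closure (Set.mem_insert_of_mem _ rfl)
  exact SetLike.lt_iff_le_and_exists.mpr
    ⟨sup_le_sup_right (Subgroup.zpowers_le.mpr a_mem) _, b, Subgroup.mem_sup_left b_mem, hb⟩

end Nilpotent

section PGroup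

open Subgroup (zpowers mem_zpowers)

variable {G : Type*} [Group G] {p : ℕ}

lemma index_centralizer_dvd_orderOf {c z : G} (hz : z ∈ Subgroup.center G)
    (h : ∀ g, pComm c g ∈ zpowers z) : (Subgroup.centralizer {c}).index ∣ orderOf z := by
  let φ : G →* zpowers z := MonoidHom.mk' (fun g => ⟨pComm c g, h g⟩) fun g k => Subtype.ext <| by
    have hg : pComm c g ∈ Subgroup.center G := Subgroup.zpowers_le.mpr hz (h g)
    change pComm c (g * k) = pComm c g * pComm c k
    rw [pComm_mul_right, conj_eq_of_mem_center hg, Subgroup.mem_center_iff.mp hg]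
  have ker_eq : φ.ker = Subgroup.centralizer {c} := by
    ext g
    rw [MonoidHom.mem_ker, Subgroup.mem_centralizer_singleton_iff, ← OneMemClass.coe_eq_one,
      eq_comm (a := g * c)]
    exact pComm_eq_one_iff_commute
  rw [← ker_eq, Subgroup.index_ker, ← Nat.card_zpowers]
  exact φ.range.card_subgroup_dvd_card

lemma relIndex_zpowers_of_card_eq_sq (hp : 0 < p) {N : Subgroup G} (hN : Nat.card N = p ^ 2)
    {z : G} (hz : z ∈ N) (hzp : orderOf z = p) : (zpowers z).relIndex N = p := by
  have hmul := card_mul_relIndex_of_le (Subgroup.zpowers_le.mpr hz)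
  rw [hN, Nat.card_zpowers, hzp, pow_two] at hmul
  exact Nat.eq_of_mul_eq_mul_left hp hmul

lemma commute_of_mem_of_card_eq_sq (hp : p.Prime) {N : Subgroup G} (hN : Nat.card N = p ^ 2)
    {z c g : G} (hz : z ∈ N) (hzp : orderOf z = p) (hzg : Commute z g) (hc : c ∈ N)
    (hcz : c ∉ zpowers z) (hcg : Commute c g) {x : G} (hx : x ∈ N) : Commute x g := by
  have mem_inf {y : G} (hy : y ∈ N) (hyg : Commute y g) : y ∈ N ⊓ Subgroup.centralizer {g} :=
    ⟨hy, Subgroup.mem_centralizer_singleton_iff.mpr hyg⟩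
  have hlt : zpowers z < N ⊓ Subgroup.centralizer {g} := SetLike.lt_iff_le_and_exists.mpr
    ⟨Subgroup.zpowers_le.mpr (mem_inf hz hzg), c, mem_inf hc hcg, hcz⟩
  have inf_eq := eq_of_lt_of_le_of_relIndex_prime hlt inf_le_left
    (relIndex_zpowers_of_card_eq_sq hp.pos hN hz hzp ▸ hp)
  exact Subgroup.mem_centralizer_singleton_iff.mp (inf_eq.ge hx).2

lemma exists_notMem_commute_of_card_eq_sq (hp : p.Prime) {N : Subgroup G} {z : G}
    (hN : Nat.card N = p ^ 2) (hindex : p ^ 2 ∣ N.index) (hz : z ∈ N ⊓ Subgroup.center G)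
    (hzp : orderOf z = p) (h : ∀ x ∈ N, ∀ g, pComm x g ∈ zpowers z) :
    ∃ a ∉ N, ∀ x ∈ N, Commute x a := by
  have hrel := relIndex_zpowers_of_card_eq_sq hp.pos hN hz.1 hzp
  obtain ⟨c, hcN, hcz⟩ : ∃ c ∈ N, c ∉ zpowers z := SetLike.not_le_iff_exists.mp fun hle =>
    hp.ne_one (hrel.symm.trans (Subgroup.relIndex_eq_one.mpr hle))
  obtain ⟨a, hac, haN⟩ : ∃ a ∈ Subgroup.centralizer {c}, a ∉ N :=
    SetLike.not_le_iff_exists.mp fun hle => by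
      have hdvd := hindex.trans <| (Subgroup.index_dvd_of_le hle).trans <|
        hzp ▸ index_centralizer_dvd_orderOf hz.2 (h c hcN)
      exact (Nat.le_of_dvd hp.pos hdvd).not_gt (lt_self_pow₀ hp.one_lt one_lt_two)
  rw [Subgroup.mem_centralizer_singleton_iff] at hac
  have hza : Commute z a := (Subgroup.mem_center_iff.mp hz.2 a).symm
  exact ⟨a, haN, fun _ => commute_of_mem_of_card_eq_sq hp hN hz.1 hzp hza hcN hcz hac.symm⟩

lemma CommutatorTower.adaptedPair {a b c d : G} (h : CommutatorTower a b c d 1 1) (hp : p.Prime)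
    (hgen : Subgroup.closure {a, b} = ⊤) (hG' : Nat.card (commutator G) = p ^ 2) (hd : d ^ p = 1)
    (ha : ∀ x ∈ commutator G, Commute x a) (hpow : ∀ x : G, x ^ p ∈ commutator G) :
    AdaptedPair p a b c d := by
  have d_ne_one : d ≠ 1 := by
    rintro rfl
    have hc := h.pComm_a_pow_b p
    simp only [one_pow, mul_one, pComm_eq_one_iff_commute.mpr (ha _ (hpow b)).symm] at hc
    have hdvd := h.card_commutator_dvd (pow_one 1) (m := p) (by rw [← hc]; exact one_mem _)
    rw [hG', orderOf_one, one_mul, one_mul, one_mul] at hdvd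
    exact (Nat.le_of_dvd hp.pos hdvd).not_gt (lt_self_pow₀ hp.one_lt one_lt_two)
  have : Fact p.Prime := ⟨hp⟩
  have hdp : orderOf d = p := orderOf_eq_prime hd d_ne_one
  have d_mem : d ∈ commutator G := h.pComm_cb ▸ pComm_mem_commutator c b
  refine ⟨h, hgen, hdp, ha, fun x hx hxb => ?_, hpow⟩
  by_contra hxd
  have hcb : Commute c b := commute_of_mem_of_card_eq_sq hp hG' d_mem hdp
    (pComm_eq_one_iff_commute.mp h.pComm_db) hx hxd hxb (h.pComm_ab ▸ pComm_mem_commutator a b)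
  exact d_ne_one (h.pComm_cb ▸ pComm_eq_one_iff_commute.mpr hcb)

variable [Finite G] [Fact p.Prime]

lemma dvd_card_inf_center (hG : IsPGroup p G) (N : Subgroup G) [N.Normal]
    (hN : p ∣ Nat.card N) : p ∣ Nat.card ↥(N ⊓ Subgroup.center G) := by
  obtain ⟨z, hz, hne⟩ := (hG.of_equiv ConjAct.toConjAct)
    |>.exists_fixed_point_of_prime_dvd_card_of_fixed_point N hN (a := 1) fun g => by simp
  have z_mem_center : (z : G) ∈ Subgroup.center G := Subgroup.mem_center_iff.mpr fun g => by
    have hzg := congrArg Subtype.val (hz (ConjAct.toConjAct g))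
    rw [ConjAct.Subgroup.val_conj_smul, ConjAct.toConjAct_smul] at hzg
    exact mul_inv_eq_iff_eq_mul.mp hzg
  refine ((hG.to_subgroup _).card_eq_or_dvd).resolve_left fun h => hne (Subtype.ext ?_)
  have z_mem : (z : G) ∈ N ⊓ Subgroup.center G := ⟨z.2, z_mem_center⟩
  rw [Subgroup.card_eq_one.mp h, Subgroup.mem_bot] at z_mem
  exact z_mem.symm

lemma le_center_of_card_eq_prime (hG : IsPGroup p G) (N : Subgroup G) [N.Normal]
    (hN : Nat.card N = p) : N ≤ Subgroup.center G := by
  have hle := Nat.le_of_dvd Nat.card_pos (dvd_card_inf_center hG N hN.symm.dvd)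
  exact inf_eq_left.mp (Subgroup.eq_of_le_of_card_ge inf_le_left (hN.trans_le hle))

lemma exists_pComm_mem_zpowers_of_card_eq_sq (hG : IsPGroup p G) (N : Subgroup G) [N.Normal]
    (hN : Nat.card N = p ^ 2) :
    ∃ z ∈ N ⊓ Subgroup.center G, orderOf z = p ∧ ∀ x ∈ N, ∀ g, pComm x g ∈ zpowers z := by
  obtain ⟨⟨z, hz⟩, hzp⟩ := exists_prime_orderOf_dvd_card' p
    (dvd_card_inf_center hG N (hN ▸ dvd_pow_self p two_ne_zero))
  rw [Subgroup.orderOf_mk] at hzp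
  refine ⟨z, hz, hzp, fun x hx g => ?_⟩
  have : (zpowers z).Normal := normal_of_le_center (Subgroup.zpowers_le.mpr hz.2)
  have hmap : Nat.card (N.map (QuotientGroup.mk' (zpowers z))) = p := by
    rw [← Subgroup.relIndex_ker, QuotientGroup.ker_mk',
      relIndex_zpowers_of_card_eq_sq (Fact.out : p.Prime).pos hN hz.1 hzp]
  have := Subgroup.Normal.map ‹N.Normal› _ (QuotientGroup.mk'_surjective (zpowers z))
  have hcomm := Subgroup.mem_center_iff.mp (le_center_of_card_eq_prime
    (hG.to_quotient (zpowers z)) _ hmap (Subgroup.mem_map_of_mem _ hx)) (QuotientGroup.mk' _ g)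
  rw [← QuotientGroup.eq_one_iff, ← QuotientGroup.mk'_apply, map_pComm,
    pComm_eq_one_iff_commute]
  exact hcomm.symm

lemma exists_adaptedPair (hG : Nat.card G = p ^ 4) (hG' : Nat.card (commutator G) = p ^ 2) :
    ∃ a b c d : G, AdaptedPair p a b c d := by
  have hp : p.Prime := Fact.out
  have hpG : IsPGroup p G := .of_card hG
  have : Group.IsNilpotent G := hpG.isNilpotent
  have commutator_ne_bot : commutator G ≠ ⊥ := fun h =>
    (Nat.one_lt_pow two_ne_zero hp.one_lt).ne (by rw [← hG', h, Subgroup.card_bot])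
  have hindex : (commutator G).index = p ^ 2 := by
    have hmul := (commutator G).card_mul_index
    rw [hG, hG', show p ^ 4 = p ^ 2 * p ^ 2 by ring] at hmul
    exact Nat.eq_of_mul_eq_mul_left (pow_pos hp.pos 2) hmul
  obtain ⟨z, hz, hzp, hcomm⟩ := exists_pComm_mem_zpowers_of_card_eq_sq hpG _ hG'
  obtain ⟨a, ha, hcomm_a⟩ := exists_notMem_commute_of_card_eq_sq hp hG' hindex.symm.dvd hz hzp hcomm
  obtain ⟨b, hgen⟩ := exists_closure_pair_eq_top hp commutator_ne_bot hindex ha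
  have d_mem : pComm (pComm a b) b ∈ zpowers z := hcomm _ (pComm_mem_commutator a b) b
  have hd := Subgroup.mem_center_iff.mp (Subgroup.zpowers_le.mpr hz.2 d_mem)
  have tower := CommutatorTower.of_closure_pair hgen
    (pComm_eq_one_iff_commute.mpr (hcomm_a _ (pComm_mem_commutator a b))) (hd a).symm
    (pComm_eq_one_iff_commute.mpr (hd b).symm)
  refine ⟨a, b, _, _, tower.adaptedPair hp hgen hG' ?_ hcomm_a
    (pow_mem_commutator_of_index_eq_sq hp commutator_ne_bot hindex)⟩
  rw [← orderOf_dvd_iff_pow_eq_one, ← hzp]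
  exact orderOf_dvd_of_mem_zpowers d_mem

end PGroup

section Presentation

variable {G : Type*} [Group G]

lemma closure_presentedGroup_of_pair (rels : Set (FreeGroup (Fin 2))) :
    Subgroup.closure {(PresentedGroup.of 0 : PresentedGroup rels), PresentedGroup.of 1} = ⊤ := by
  rw [← PresentedGroup.closure_range_of rels]
  congr 1
  ext x
  simp [Fin.exists_fin_two, eq_comm]

lemma nonempty_mulEquiv_presentedGroup [Finite G] {rels : Set (FreeGroup (Fin 2))} {a b : G}
    (hgen : Subgroup.closure {a, b} = ⊤) (hrels : ∀ r ∈ rels, FreeGroup.lift ![a, b] r = 1)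
    (hcard : Nat.card (PresentedGroup rels) ∣ Nat.card G) :
    Nonempty (G ≃* PresentedGroup rels) := by
  let φ := PresentedGroup.toGroup hrels
  have hsurj : Function.Surjective φ := by
    rw [← MonoidHom.range_eq_top, eq_top_iff, ← hgen, Subgroup.closure_le, Set.pair_subset_iff]
    exact ⟨⟨PresentedGroup.of 0, PresentedGroup.toGroup.of hrels⟩,
      ⟨PresentedGroup.of 1, PresentedGroup.toGroup.of hrels⟩⟩
  have : Finite (PresentedGroup rels) :=
    Nat.finite_of_card_ne_zero (ne_zero_of_dvd_ne_zero Nat.card_pos.ne' hcard)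
  have hbij : Function.Bijective φ := (Nat.bijective_iff_surjective_and_card φ).mpr
    ⟨hsurj, (Nat.le_of_dvd Nat.card_pos hcard).antisymm (Nat.card_le_card_of_surjective φ hsurj)⟩
  exact ⟨(MulEquiv.ofBijective φ hbij).symm⟩

lemma forall_relsOrdP4Class3_iff {f : FreeGroup (Fin 2) →* G} {a b : G} {p : ℕ}
    (ha : f (.of 0) = a) (hb : f (.of 1) = b) :
    (∀ r ∈ relsOrdP4Class3 p, f r = 1) ↔
      a ^ p = 1 ∧ b ^ p = 1 ∧ pComm (pComm a b) a = 1 ∧ pComm (pComm (pComm a b) b) a = 1 ∧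
        pComm (pComm (pComm a b) b) b = 1 := by
  simp only [relsOrdP4Class3, Set.mem_insert_iff, Set.mem_singleton_iff, forall_eq_or_imp,
    forall_eq, map_pow, map_pComm, ha, hb]

lemma forall_relsOrd81_iff {f : FreeGroup (Fin 2) →* G} {a b : G} (ha : f (.of 0) = a)
    (hb : f (.of 1) = b) :
    (∀ r ∈ relsOrd81, f r = 1) ↔
      a ^ 9 = 1 ∧ b ^ 3 = 1 ∧ pComm (pComm a b) a = 1 ∧ pComm (pComm a b) b = a ^ 6 ∧
        pComm (pComm (pComm a b) b) b = 1 := by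
  simp only [relsOrd81, Set.mem_insert_iff, Set.mem_singleton_iff, forall_eq_or_imp, forall_eq,
    map_pow, map_mul, map_inv, map_pComm, ha, hb, mul_inv_eq_one]

lemma card_presentedGroup_relsOrdP4Class3_dvd (p : ℕ) :
    Nat.card (PresentedGroup (relsOrdP4Class3 p)) ∣ p ^ 4 := by
  obtain ⟨ha, hb, hca, hda, hdb⟩ := (forall_relsOrdP4Class3_iff (a := PresentedGroup.of 0)
    (b := PresentedGroup.of 1) rfl rfl).mp fun r (hr : r ∈ relsOrdP4Class3 p) =>
      PresentedGroup.one_of_mem hr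
  have hgen := closure_presentedGroup_of_pair (relsOrdP4Class3 p)
  have tower := CommutatorTower.of_closure_pair hgen hca (pComm_eq_one_iff_commute.mp hda) hdb
  exact tower.card_dvd_of_b_pow_eq_one hgen (ha ▸ one_mem _) hb

lemma card_presentedGroup_relsOrd81_dvd : Nat.card (PresentedGroup relsOrd81) ∣ 3 ^ 4 := by
  obtain ⟨ha, hb, hca, hd, hdb⟩ := (forall_relsOrd81_iff (a := PresentedGroup.of 0)
    (b := PresentedGroup.of 1) rfl rfl).mp fun _ hr => PresentedGroup.one_of_mem hr
  have hgen := closure_presentedGroup_of_pair relsOrd81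
  have tower := CommutatorTower.of_closure_pair hgen hca (hd ▸ Commute.pow_self _ 6) hdb
  refine tower.card_dvd_of_b_pow_eq_one hgen ?_ hb
  rw [hd, eq_inv_of_mul_eq_one_left ((pow_add _ 3 6).symm.trans ha)]
  exact inv_mem (Subgroup.mem_zpowers _)

namespace AdaptedPair

variable {p : ℕ} {a b c d : G} [Finite G]

lemma nonempty_mulEquiv_relsOrdP4Class3 (h : AdaptedPair p a b c d) (hG : Nat.card G = p ^ 4)
    (ha : a ^ p = 1) (hb : b ^ p = 1) : Nonempty (G ≃* PresentedGroup (relsOrdP4Class3 p)) := by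
  refine nonempty_mulEquiv_presentedGroup h.closure_pair ?_
    (hG ▸ card_presentedGroup_relsOrdP4Class3_dvd p)
  rw [forall_relsOrdP4Class3_iff FreeGroup.lift_apply_of FreeGroup.lift_apply_of]
  simp only [Matrix.cons_val_zero, Matrix.cons_val_one, h.pComm_ab, h.pComm_cb]
  exact ⟨ha, hb, h.pComm_ca, pComm_eq_one_iff_commute.mpr h.commute_da, h.pComm_db⟩

lemma nonempty_mulEquiv_relsOrd81 (h : AdaptedPair 3 a b c d) (hG : Nat.card G = 3 ^ 4)
    (ha : a ^ 3 * d = 1) (hb : b ^ 3 = 1) : Nonempty (G ≃* PresentedGroup relsOrd81) := by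
  have a_pow_nine : a ^ 9 = 1 := by
    rw [show 9 = 3 * 3 from rfl, pow_mul, eq_inv_of_mul_eq_one_left ha, inv_pow, h.d_pow_eq_one,
      inv_one]
  have d_eq : d = a ^ 6 := mul_left_cancel (ha.trans (a_pow_nine.symm.trans (pow_add a 3 6)))
  refine nonempty_mulEquiv_presentedGroup h.closure_pair ?_
    (hG ▸ card_presentedGroup_relsOrd81_dvd)
  rw [forall_relsOrd81_iff FreeGroup.lift_apply_of FreeGroup.lift_apply_of]
  simp only [Matrix.cons_val_zero, Matrix.cons_val_one, h.pComm_ab, h.pComm_cb]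
  exact ⟨a_pow_nine, hb, h.pComm_ca, d_eq, h.pComm_db⟩

end AdaptedPair

end Presentation

lemma not_card_commutator_freeCentralExtension_dvd {G : Type*} [Group G] {p : ℕ} (hp : 0 < p)
    (hG' : Nat.card (commutator G) = p ^ 2) (hM : p < Nat.card (SchurMultiplier G)) :
    ¬ Nat.card (commutator (FreeCentralExtension G)) ∣ p ^ 3 := by
  rw [FreeCentralExtension.card_commutator, hG', pow_succ' p 2]
  exact fun h => hM.not_ge (Nat.le_of_dvd hp (Nat.dvd_of_mul_dvd_mul_right (pow_pos hp 2) h))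

theorem classification_p4_commutator_p_sq_general {p : ℕ} (hp : p.Prime)
    {G : Type*} [Group G] (hG : Nat.card G = p ^ 4)
    (hG' : Nat.card (commutator G) = p ^ 2)
    (hM : p < Nat.card (SchurMultiplier G)) :
    (p = 3 ∧ Nonempty (G ≃* PresentedGroup relsOrd81)) ∨
    (p ≠ 3 ∧ Nonempty (G ≃* PresentedGroup (relsOrdP4Class3 p))) := by
  have : Fact p.Prime := ⟨hp⟩
  have : Finite G := Nat.finite_of_card_ne_zero (hG ▸ pow_ne_zero 4 hp.ne_zero)
  obtain ⟨a, b, c, d, h⟩ := exists_adaptedPair hG hG'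
  obtain ⟨hp2, hb, had⟩ := h.pow_eq_of_not_card_commutator_dvd hp
    (FreeCentralExtension.proj_surjective G) (FreeCentralExtension.ker_proj_le_center G)
    (not_card_commutator_freeCentralExtension_dvd hp.pos hG' hM)
  by_cases hp3 : p = 3
  · subst hp3
    rw [Nat.choose_self, pow_one] at had
    exact .inl ⟨rfl, h.nonempty_mulEquiv_relsOrd81 hG had hb⟩
  · have two_lt : 2 < p := hp.two_le.lt_of_ne' hp2
    obtain ⟨k, hk⟩ := hp.dvd_choose_self three_ne_zero (Nat.lt_of_le_of_ne two_lt (Ne.symm hp3))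
    rw [hk, pow_mul, h.d_pow_eq_one, one_pow, mul_one] at had
    exact .inr ⟨hp3, h.nonempty_mulEquiv_relsOrdP4Class3 hG had hb⟩

/-- **Theorem (order `p⁴`, `|G'| = p²`).** Let `G` be a group of order `p⁴` with
`|G'| = p²` and `|M(G)| = p²` (i.e. `s(G) = 2`). Then `G` is isomorphic to
`⟨a,b ∣ a⁹ = b³ = 1, [a,b,a] = 1, [a,b,b] = a⁶, [a,b,b,b] = 1⟩` (with `p = 3`), or to
`⟨a,b ∣ a^p = b^p = 1, [a,b,a] = [a,b,b,a] = [a,b,b,b] = 1⟩` (with `p ≠ 3`). -/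
theorem classification_p4_commutator_p_sq {p : ℕ} (hp : p.Prime)
    {G : Type*} [Group G] (hG : Nat.card G = p ^ 4)
    (hG' : Nat.card (commutator G) = p ^ 2)
    (hM : Nat.card (SchurMultiplier G) = p ^ 2) :
    (p = 3 ∧ Nonempty (G ≃* PresentedGroup relsOrd81)) ∨
    (p ≠ 3 ∧ Nonempty (G ≃* PresentedGroup (relsOrdP4Class3 p))) :=
  classification_p4_commutator_p_sq_general hp hG hG'
    (hM ▸ lt_self_pow₀ hp.one_lt one_lt_two)
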